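/- There exists a constant C > 0 such that for every m ≥ 1, N = 2^m, every integer k with 1 ≤ k ≤ m, and every function u that is four times continuously differentiable on a neighbourhood of [0,1]² and vanishes on the boundary of [0,1]², one has |||u − I^{(k)}_{N,N}u||| ≤ C ( N^{−1} |u|₂ + 4^{k+1} N^{−3} ‖∂⁴u/∂x²∂y²‖_{0,Ω} ). -/

import Mathlib

open MeasureTheory Finset

noncomputable section

/-- The hat function `ψ_i^N` on the uniform mesh of `[0,1]` with `N` intervals. -/
def hat (N i : ℕ) (x : ℝ) : ℝ :=
  if ((i : ℝ) - 1) / N ≤ x ∧ x ≤ (i : ℝ) / N then N * (x - ((i : ℝ) - 1) / N)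
  else if (i : ℝ) / N ≤ x ∧ x ≤ ((i : ℝ) + 1) / N then N * (((i : ℝ) + 1) / N - x)
  else 0

/-- The nodal piecewise bilinear interpolant `I_{Nx,Ny} u`. -/
def interp (Nx Ny : ℕ) (u : ℝ × ℝ → ℝ) : ℝ × ℝ → ℝ := fun p =>
  ∑ i ∈ range (Nx + 1), ∑ j ∈ range (Ny + 1),
    u ((i : ℝ) / Nx, (j : ℝ) / Ny) * hat Nx i p.1 * hat Ny j p.2

/-- The one-directional interpolant `I_{Nx,0} u` (interpolation in the `x`-direction only). -/
def interpX (Nx : ℕ) (u : ℝ × ℝ → ℝ) : ℝ × ℝ → ℝ := fun p =>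
  ∑ i ∈ range (Nx + 1), u ((i : ℝ) / Nx, p.2) * hat Nx i p.1

/-- The one-directional interpolant `I_{0,Ny} u` (interpolation in the `y`-direction only). -/
def interpY (Ny : ℕ) (u : ℝ × ℝ → ℝ) : ℝ × ℝ → ℝ := fun p =>
  ∑ j ∈ range (Ny + 1), u (p.1, (j : ℝ) / Ny) * hat Ny j p.2

/-- The two-scale interpolant `Î_{N,N} u = I_{N,σ}u + I_{σ,N}u − I_{σ,σ}u`. -/
def twoScale (N σ : ℕ) (u : ℝ × ℝ → ℝ) : ℝ × ℝ → ℝ := fun p =>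
  interp N σ u p + interp σ N u p - interp σ σ u p

/-- The multiscale interpolant
`I^{(k)}_{N,N} u = Σ_{i=0}^{k} I_{N/2^i, N/2^{k−i}}u − Σ_{i=1}^{k} I_{N/2^i, N/2^{k+1−i}}u`. -/
def msInterp (N k : ℕ) (u : ℝ × ℝ → ℝ) : ℝ × ℝ → ℝ := fun p =>
  ∑ i ∈ range (k + 1), interp (N / 2 ^ i) (N / 2 ^ (k - i)) u p
    - ∑ i ∈ Finset.Icc 1 k, interp (N / 2 ^ i) (N / 2 ^ (k + 1 - i)) u p

/-- The closed square `[0,1]²`. -/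
def unitSquare : Set (ℝ × ℝ) := Set.Icc (0 : ℝ) 1 ×ˢ Set.Icc (0 : ℝ) 1

/-- The open square `Ω = (0,1)²`. -/
def Omega2 : Set (ℝ × ℝ) := Set.Ioo (0 : ℝ) 1 ×ˢ Set.Ioo (0 : ℝ) 1

/-- Partial derivative in `x` (defined a.e. for Lipschitz functions; junk value `0` elsewhere). -/
def pderivX (v : ℝ × ℝ → ℝ) : ℝ × ℝ → ℝ := fun p => deriv (fun x => v (x, p.2)) p.1

/-- Partial derivative in `y` (defined a.e. for Lipschitz functions; junk value `0` elsewhere). -/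
def pderivY (v : ℝ × ℝ → ℝ) : ℝ × ℝ → ℝ := fun p => deriv (fun y => v (p.1, y)) p.2

/-- The `L²(Ω)` norm `‖v‖_{0,Ω}`. -/
def L2norm (v : ℝ × ℝ → ℝ) : ℝ := Real.sqrt (∫ p in Omega2, (v p) ^ 2)

/-- The energy norm `|||v||| = (∫_Ω |∇v|² + ∫_Ω v²)^{1/2}`, gradients taken a.e. -/
def energyNorm (v : ℝ × ℝ → ℝ) : ℝ :=
  Real.sqrt (∫ p in Omega2, ((pderivX v p) ^ 2 + (pderivY v p) ^ 2 + (v p) ^ 2))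

/-- `u` is four times continuously differentiable on a neighbourhood of `[0,1]²`. -/
def C4Near (u : ℝ × ℝ → ℝ) : Prop :=
  ∃ U : Set (ℝ × ℝ), IsOpen U ∧ unitSquare ⊆ U ∧ ContDiffOn ℝ 4 u U

/-- `u` vanishes on the boundary of `[0,1]²`. -/
def VanishOnBoundary (u : ℝ × ℝ → ℝ) : Prop :=
  ∀ p ∈ unitSquare, (p.1 = 0 ∨ p.1 = 1 ∨ p.2 = 0 ∨ p.2 = 1) → u p = 0

/-- The seminorm `|u|₂ = ‖u_xx‖_{0,Ω} + ‖u_xy‖_{0,Ω} + ‖u_yy‖_{0,Ω}`. -/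
def semi2 (u : ℝ × ℝ → ℝ) : ℝ :=
  L2norm (pderivX (pderivX u)) + L2norm (pderivX (pderivY u)) + L2norm (pderivY (pderivY u))

/-- The mixed fourth derivative `∂⁴u/∂x²∂y²`. -/
def uxxyy (u : ℝ × ℝ → ℝ) : ℝ × ℝ → ℝ := pderivX (pderivX (pderivY (pderivY u)))

/-- The bilinear form `B(v,w) = ∫_Ω ∇v·∇w + ∫_Ω v w`, gradients taken a.e. -/
def Bform (v w : ℝ × ℝ → ℝ) : ℝ :=
  ∫ p in Omega2, (pderivX v p * pderivX w p + pderivY v p * pderivY w p + v p * w p)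

/-! ### One-dimensional interpolation -/

/-- The nodal piecewise linear interpolant of a function of one variable. -/
def linInterp (N : ℕ) (g : ℝ → ℝ) (x : ℝ) : ℝ :=
  ∑ i ∈ range (N + 1), g ((i : ℝ) / N) * hat N i x

theorem hat_eq_max {N : ℕ} (hN : 0 < N) (i : ℕ) (x : ℝ) :
    hat N i x = max 0 (1 - |(N : ℝ) * x - i|) := by
  have hN' : (0 : ℝ) < N := by exact_mod_cast hN
  unfold hat
  simp only [div_le_iff₀ hN', le_div_iff₀ hN']
  split_ifs with h1 h2
  · rw [abs_of_nonpos (by linarith), max_eq_right (by linarith)]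
    field_simp
    ring
  · rw [abs_of_nonneg (by linarith), max_eq_right (by linarith)]
    field_simp
    ring
  · rw [max_eq_left]
    by_contra! h
    have h3 := abs_lt.1 (show |(N : ℝ) * x - i| < 1 by linarith)
    rcases le_total ((N : ℝ) * x) i with h4 | h4
    · exact h1 ⟨by linarith, by linarith⟩
    · exact h2 ⟨by linarith, by linarith⟩

theorem continuous_hat {N : ℕ} (hN : 0 < N) (i : ℕ) : Continuous (hat N i) := by
  have : hat N i = fun x => max 0 (1 - |(N : ℝ) * x - i|) := funext (hat_eq_max hN i)
  rw [this]
  fun_prop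

theorem linInterp_eq_on_cell {N i : ℕ} (hi : i < N) (g : ℝ → ℝ) {x : ℝ}
    (hx : x ∈ Set.Icc ((i : ℝ) / N) (((i : ℝ) + 1) / N)) :
    linInterp N g x =
      g (i / N) + (N * (g (((i : ℝ) + 1) / N) - g (i / N))) * (x - i / N) := by
  have hN : 0 < N := by omega
  have hN' : (0 : ℝ) < N := by exact_mod_cast hN
  obtain ⟨h1, h2⟩ := hx
  rw [div_le_iff₀ hN'] at h1
  rw [le_div_iff₀ hN'] at h2
  unfold linInterp
  rw [Finset.sum_eq_add i (i + 1) (by omega)]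
  · rw [hat_eq_max hN, hat_eq_max hN]
    push_cast
    rw [abs_of_nonneg (by linarith), abs_of_nonpos (by linarith), max_eq_right (by linarith),
      max_eq_right (by linarith)]
    field_simp
    ring
  · rintro c - ⟨hc1, hc2⟩
    rw [hat_eq_max hN, max_eq_left, mul_zero]
    rcases lt_or_gt_of_ne hc1 with h | h
    · have : (c : ℝ) + 1 ≤ i := by exact_mod_cast h
      linarith [le_abs_self ((N : ℝ) * x - c)]
    · have : (i : ℝ) + 1 + 1 ≤ c := by exact_mod_cast (by omega : i + 1 + 1 ≤ c)
      linarith [neg_abs_le ((N : ℝ) * x - c)]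
  · intro h
    exact absurd (mem_range.2 (by omega)) h
  · intro h
    exact absurd (mem_range.2 (by omega)) h

theorem hasDerivAt_linInterp {N i : ℕ} (hi : i < N) (g : ℝ → ℝ) {x : ℝ}
    (hx : x ∈ Set.Ioo ((i : ℝ) / N) (((i : ℝ) + 1) / N)) :
    HasDerivAt (linInterp N g) (N * (g (((i : ℝ) + 1) / N) - g (i / N))) x := by
  have h : HasDerivAt (fun t : ℝ => g (i / N) +
      (N * (g (((i : ℝ) + 1) / N) - g (i / N))) * (t - i / N))
      (N * (g (((i : ℝ) + 1) / N) - g (i / N))) x := by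
    simpa using (((hasDerivAt_id x).sub_const ((i : ℝ) / N)).const_mul
      (N * (g (((i : ℝ) + 1) / N) - g (i / N)))).const_add (g (i / N))
  refine h.congr_of_eventuallyEq ?_
  filter_upwards [isOpen_Ioo.mem_nhds hx] with t ht
  exact linInterp_eq_on_cell hi g (Set.Ioo_subset_Icc_self ht)

theorem exists_cell_of_irrational {N : ℕ} (hN : 0 < N) {x : ℝ} (hx : x ∈ Set.Ioo (0 : ℝ) 1)
    (hirr : Irrational x) :
    ∃ i < N, x ∈ Set.Ioo ((i : ℝ) / N) (((i : ℝ) + 1) / N) := by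
  have hN' : (0 : ℝ) < N := by exact_mod_cast hN
  have hpos : 0 ≤ (N : ℝ) * x := mul_nonneg hN'.le hx.1.le
  refine ⟨⌊(N : ℝ) * x⌋₊, ?_, ?_, ?_⟩
  · rw [Nat.floor_lt hpos]
    nlinarith [hx.2]
  · refine lt_of_le_of_ne ?_ ?_
    · rw [div_le_iff₀ hN', mul_comm x]
      exact Nat.floor_le hpos
    · intro h
      exact hirr ⟨(⌊(N : ℝ) * x⌋₊ : ℚ) / N, by push_cast; exact h⟩
  · rw [lt_div_iff₀ hN', mul_comm x]
    exact Nat.lt_floor_add_one _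

theorem differentiableAt_linInterp {N : ℕ} (hN : 0 < N) (g : ℝ → ℝ) {x : ℝ}
    (hx : x ∈ Set.Ioo (0 : ℝ) 1) (hirr : Irrational x) :
    DifferentiableAt ℝ (linInterp N g) x := by
  obtain ⟨i, hi, hxi⟩ := exists_cell_of_irrational hN hx hirr
  exact (hasDerivAt_linInterp hi g hxi).differentiableAt

theorem sq_integral_le {f : ℝ → ℝ} (hf : Continuous f) {a b : ℝ} (hab : a ≤ b) :
    (∫ t in a..b, f t) ^ 2 ≤ (b - a) * ∫ t in a..b, f t ^ 2 := by
  rcases hab.eq_or_lt with rfl | hlt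
  · simp
  set M := ∫ t in a..b, f t with hM
  have h0 : 0 ≤ ∫ t in a..b, ((b - a) * f t - M) ^ 2 :=
    intervalIntegral.integral_nonneg hab fun t _ => sq_nonneg _
  have h1 : ∫ t in a..b, ((b - a) * f t - M) ^ 2 =
      (b - a) ^ 2 * (∫ t in a..b, f t ^ 2) - 2 * (b - a) * M * M + (b - a) * M ^ 2 := by
    have : ∀ t, ((b - a) * f t - M) ^ 2 =
        (b - a) ^ 2 * f t ^ 2 - 2 * (b - a) * M * f t + M ^ 2 := fun t => by ring
    simp_rw [this]
    rw [intervalIntegral.integral_add, intervalIntegral.integral_sub,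
      intervalIntegral.integral_const_mul, intervalIntegral.integral_const_mul,
      intervalIntegral.integral_const, smul_eq_mul]
    all_goals exact Continuous.intervalIntegrable (by fun_prop) _ _
  rw [h1] at h0
  have h2 : 0 < b - a := by linarith
  nlinarith

theorem sq_sub_le_integral_deriv {g : ℝ → ℝ} (hg : ContDiff ℝ 1 g) {a b x y : ℝ}
    (hx : x ∈ Set.Icc a b) (hy : y ∈ Set.Icc a b) :
    (g x - g y) ^ 2 ≤ (b - a) * ∫ t in a..b, deriv g t ^ 2 := by
  wlog hxy : y ≤ x generalizing x y
  · have := this hy hx (le_of_not_ge hxy)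
    rwa [← neg_sub, neg_sq] at this
  have hd : Continuous (deriv g) := hg.continuous_deriv le_rfl
  have h1 : ∫ t in y..x, deriv g t = g x - g y :=
    intervalIntegral.integral_deriv_eq_sub
      (fun t _ => (hg.differentiable one_ne_zero).differentiableAt) (hd.intervalIntegrable _ _)
  rw [← h1]
  refine (sq_integral_le hd hxy).trans ?_
  have h2 : ∫ t in y..x, deriv g t ^ 2 ≤ ∫ t in a..b, deriv g t ^ 2 :=
    intervalIntegral.integral_mono_interval hy.1 hxy hx.2
      (Filter.Eventually.of_forall fun t => sq_nonneg _)
      (Continuous.intervalIntegrable (by fun_prop) _ _)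
  have h3 : 0 ≤ ∫ t in y..x, deriv g t ^ 2 :=
    intervalIntegral.integral_nonneg hxy fun t _ => sq_nonneg _
  exact mul_le_mul (by linarith [hx.2, hy.1]) h2 h3 (by linarith [hx.2, hy.1])

section Cell

variable {N i : ℕ} {g : ℝ → ℝ} {x : ℝ}

theorem cell_lt (hi : i < N) : (i : ℝ) / N < ((i : ℝ) + 1) / N := by
  have hN : (0 : ℝ) < N := by exact_mod_cast (by omega : 0 < N)
  gcongr
  linarith

theorem cell_length (i N : ℕ) : ((i : ℝ) + 1) / N - (i : ℝ) / N = (N : ℝ)⁻¹ := by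
  rw [← sub_div, add_sub_cancel_left, one_div]

theorem sq_sub_linInterp_le_deriv (hi : i < N) (hg : ContDiff ℝ 1 g)
    (hx : x ∈ Set.Icc ((i : ℝ) / N) (((i : ℝ) + 1) / N)) :
    (g x - linInterp N g x) ^ 2 ≤
      (N : ℝ)⁻¹ * ∫ t in ((i : ℝ) / N)..(((i : ℝ) + 1) / N), deriv g t ^ 2 := by
  have hN : (0 : ℝ) < N := by exact_mod_cast (by omega : 0 < N)
  have hlt := cell_lt hi
  have ha := sq_sub_le_integral_deriv hg hx (Set.left_mem_Icc.2 hlt.le)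
  have hb := sq_sub_le_integral_deriv hg hx (Set.right_mem_Icc.2 hlt.le)
  rw [cell_length] at ha hb
  rw [linInterp_eq_on_cell hi g hx]
  obtain ⟨hx1, hx2⟩ := hx
  have hlen := cell_length i N
  set a := (i : ℝ) / N
  set b := ((i : ℝ) + 1) / N
  set K := (N : ℝ)⁻¹ * ∫ t in a..b, deriv g t ^ 2
  set s := N * (x - a) with hs
  have hs0 : 0 ≤ s := mul_nonneg hN.le (by linarith)
  have hs1 : s ≤ 1 := by
    rw [hs, ← mul_inv_cancel₀ hN.ne', ← hlen]
    gcongr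
  have hid : g x - (g a + N * (g b - g a) * (x - a)) =
      (1 - s) * (g x - g a) + s * (g x - g b) := by rw [hs]; ring
  rw [hid]
  nlinarith [mul_nonneg (mul_nonneg hs0 (sub_nonneg.2 hs1)) (sq_nonneg ((g x - g a) - (g x - g b))),
    mul_le_mul_of_nonneg_left ha (sub_nonneg.2 hs1), mul_le_mul_of_nonneg_left hb hs0]

theorem sq_deriv_sub_slope_le (hi : i < N) (hg : ContDiff ℝ 2 g)
    (hx : x ∈ Set.Icc ((i : ℝ) / N) (((i : ℝ) + 1) / N)) :
    (deriv g x - N * (g (((i : ℝ) + 1) / N) - g (i / N))) ^ 2 ≤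
      (N : ℝ)⁻¹ * ∫ t in ((i : ℝ) / N)..(((i : ℝ) + 1) / N), deriv (deriv g) t ^ 2 := by
  have hlt := cell_lt hi
  have hg' : ContDiff ℝ 1 (deriv g) := ContDiff.deriv' (by simpa [one_add_one_eq_two] using hg)
  obtain ⟨ξ, hξ, hξe⟩ := exists_deriv_eq_slope g hlt hg.continuous.continuousOn
    (hg.differentiable two_ne_zero).differentiableOn
  have : N * (g (((i : ℝ) + 1) / N) - g (i / N)) = deriv g ξ := by
    rw [hξe, cell_length, div_inv_eq_mul, mul_comm]
  rw [this, ← cell_length i N]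
  exact sq_sub_le_integral_deriv hg' hx (Set.Ioo_subset_Icc_self hξ)

theorem sq_deriv_sub_linInterp_le (hi : i < N) (hg : ContDiff ℝ 2 g)
    (hx : x ∈ Set.Ioo ((i : ℝ) / N) (((i : ℝ) + 1) / N)) :
    deriv (fun t => g t - linInterp N g t) x ^ 2 ≤
      (N : ℝ)⁻¹ * ∫ t in ((i : ℝ) / N)..(((i : ℝ) + 1) / N), deriv (deriv g) t ^ 2 := by
  rw [((hg.differentiable two_ne_zero).differentiableAt.hasDerivAt.fun_sub
    (hasDerivAt_linInterp hi g hx)).deriv]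
  exact sq_deriv_sub_slope_le hi hg (Set.Ioo_subset_Icc_self hx)

theorem sq_sub_linInterp_le_deriv_deriv (hi : i < N) (hg : ContDiff ℝ 2 g)
    (hx : x ∈ Set.Icc ((i : ℝ) / N) (((i : ℝ) + 1) / N)) :
    (g x - linInterp N g x) ^ 2 ≤ (N : ℝ)⁻¹ ^ 2 *
      ((N : ℝ)⁻¹ * ∫ t in ((i : ℝ) / N)..(((i : ℝ) + 1) / N), deriv (deriv g) t ^ 2) := by
  have hlt := cell_lt hi
  set a := (i : ℝ) / N with ha
  set b := ((i : ℝ) + 1) / N with hb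
  set K := (N : ℝ)⁻¹ * ∫ t in a..b, deriv (deriv g) t ^ 2
  set s := N * (g b - g a) with hs
  rcases hx.1.eq_or_lt with hxa | hxa
  · rw [linInterp_eq_on_cell hi g hx, ← ha, ← hxa]
    have hK : 0 ≤ K := mul_nonneg (by positivity)
      (intervalIntegral.integral_nonneg hlt.le fun t _ => sq_nonneg _)
    simpa using mul_nonneg (by positivity) hK
  · have hderiv : ∀ t, HasDerivAt (fun t => g t - s * t) (deriv g t - s) t := fun t => by
      simpa using (hg.differentiable two_ne_zero).differentiableAt.hasDerivAt.fun_sub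
        ((hasDerivAt_id t).const_mul s)
    obtain ⟨ξ, hξ, hξe⟩ := exists_hasDerivAt_eq_slope (fun t => g t - s * t)
      (fun t => deriv g t - s) hxa
      (fun t _ => (hderiv t).continuousAt.continuousWithinAt) (fun t _ => hderiv t)
    have hK := sq_deriv_sub_slope_le hi hg (x := ξ) ⟨hξ.1.le, hξ.2.le.trans hx.2⟩
    rw [linInterp_eq_on_cell hi g hx, ← ha, ← hb, ← hs]
    have hxa' : x - a ≠ 0 := by linarith
    have : g x - (g a + s * (x - a)) = (x - a) * (deriv g ξ - s) := by
      rw [hξe]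
      field_simp
      ring
    rw [this, mul_pow]
    refine mul_le_mul ?_ hK (sq_nonneg _) (by positivity)
    rw [← cell_length i N]
    have := hx.2
    gcongr

end Cell

theorem lintegral_sq_le_of_cells {N : ℕ} (hN : 0 < N) {f q : ℝ → ℝ} (hq : Continuous q) {c : ℝ}
    (hc : 0 ≤ c)
    (h : ∀ i < N, ∀ x ∈ Set.Ioo ((i : ℝ) / N) (((i : ℝ) + 1) / N),
      f x ^ 2 ≤ c * ((N : ℝ)⁻¹ * ∫ t in ((i : ℝ) / N)..(((i : ℝ) + 1) / N), q t ^ 2)) :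
    ∫⁻ x in Set.Ioo (0 : ℝ) 1, ENNReal.ofReal (f x ^ 2) ≤
      ENNReal.ofReal (c * (N : ℝ)⁻¹ ^ 2) *
        ∫⁻ x in Set.Ioo (0 : ℝ) 1, ENNReal.ofReal (q x ^ 2) := by
  have hN' : (0 : ℝ) < N := by exact_mod_cast hN
  set I : ℕ → ℝ := fun i => ∫ t in ((i : ℝ) / N)..(((i : ℝ) + 1) / N), q t ^ 2 with hI
  have hI0 : ∀ i, 0 ≤ I i := fun i =>
    intervalIntegral.integral_nonneg (by gcongr; linarith) fun t _ => sq_nonneg _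
  have hcover : Set.Ioo (0 : ℝ) 1 ⊆
      ⋃ i ∈ range N, Set.Ioc ((i : ℝ) / N) (((i : ℝ) + 1) / N) := by
    intro x hx
    have hpos : 0 < (N : ℝ) * x := mul_pos hN' hx.1
    have hceil : 0 < ⌈(N : ℝ) * x⌉₊ := Nat.ceil_pos.2 hpos
    have hlt := Nat.ceil_lt_add_one hpos.le
    have hle := Nat.le_ceil ((N : ℝ) * x)
    have hcN : ⌈(N : ℝ) * x⌉₊ ≤ N := Nat.ceil_le.2 (by nlinarith [hx.2])
    obtain ⟨j, hj⟩ : ∃ j, ⌈(N : ℝ) * x⌉₊ = j + 1 := ⟨_, (Nat.succ_pred_eq_of_pos hceil).symm⟩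
    rw [hj] at hlt hle hcN
    push_cast at hlt hle
    simp only [Set.mem_iUnion, mem_range]
    refine ⟨j, by omega, ?_, ?_⟩
    · rw [div_lt_iff₀ hN']; linarith
    · rw [le_div_iff₀ hN']; linarith
  have hcell : ∀ i ∈ range N,
      ∫⁻ x in Set.Ioc ((i : ℝ) / N) (((i : ℝ) + 1) / N), ENNReal.ofReal (f x ^ 2) ≤
        ENNReal.ofReal (c * (N : ℝ)⁻¹ ^ 2 * I i) := by
    intro i hi
    rw [← restrict_Ioo_eq_restrict_Ioc]
    calc ∫⁻ x in Set.Ioo ((i : ℝ) / N) (((i : ℝ) + 1) / N), ENNReal.ofReal (f x ^ 2)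
        ≤ ∫⁻ x in Set.Ioo ((i : ℝ) / N) (((i : ℝ) + 1) / N),
            ENNReal.ofReal (c * ((N : ℝ)⁻¹ * I i)) :=
          setLIntegral_mono' measurableSet_Ioo fun x hx =>
            ENNReal.ofReal_le_ofReal (h i (mem_range.1 hi) x hx)
      _ = ENNReal.ofReal (c * (N : ℝ)⁻¹ ^ 2 * I i) := by
          rw [setLIntegral_const, Real.volume_Ioo, cell_length, ← ENNReal.ofReal_mul']
          · congr 1; ring
          · positivity
  have hsum : ∑ i ∈ range N, I i = ∫ t in (0 : ℝ)..1, q t ^ 2 := by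
    have := intervalIntegral.sum_integral_adjacent_intervals (μ := volume)
      (f := fun t => q t ^ 2) (a := fun i : ℕ => (i : ℝ) / N) (n := N)
      (fun i _ => Continuous.intervalIntegrable (by fun_prop) _ _)
    simpa [hI, div_self hN'.ne'] using this
  have hq01 : ∫⁻ x in Set.Ioo (0 : ℝ) 1, ENNReal.ofReal (q x ^ 2) =
      ENNReal.ofReal (∫ t in (0 : ℝ)..1, q t ^ 2) := by
    rw [intervalIntegral.integral_of_le zero_le_one, restrict_Ioo_eq_restrict_Ioc,
      ofReal_integral_eq_lintegral_ofReal]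
    · exact ((Continuous.intervalIntegrable (by fun_prop) 0 1).1)
    · exact Filter.Eventually.of_forall fun t => sq_nonneg _
  calc ∫⁻ x in Set.Ioo (0 : ℝ) 1, ENNReal.ofReal (f x ^ 2)
      ≤ ∫⁻ x in ⋃ i ∈ range N, Set.Ioc ((i : ℝ) / N) (((i : ℝ) + 1) / N),
          ENNReal.ofReal (f x ^ 2) := lintegral_mono_set hcover
    _ ≤ ∑ i ∈ range N, ∫⁻ x in Set.Ioc ((i : ℝ) / N) (((i : ℝ) + 1) / N),
          ENNReal.ofReal (f x ^ 2) := by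
        rw [← Finset.sum_coe_sort, ← Finset.set_biUnion_coe, Set.biUnion_eq_iUnion]
        exact (lintegral_iUnion_le _ _).trans_eq (tsum_fintype _)
    _ ≤ ∑ i ∈ range N, ENNReal.ofReal (c * (N : ℝ)⁻¹ ^ 2 * I i) := sum_le_sum hcell
    _ = _ := by
        rw [← ENNReal.ofReal_sum_of_nonneg fun i _ => mul_nonneg (by positivity) (hI0 i),
          ← mul_sum, hsum, hq01, ENNReal.ofReal_mul (by positivity)]

/-! ### Partial derivatives of smooth functions -/

theorem pderivX_eq_fderiv {u : ℝ × ℝ → ℝ} (hu : Differentiable ℝ u) :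
    pderivX u = fun p => fderiv ℝ u p (1, 0) := by
  funext p
  have h : HasDerivAt (fun x : ℝ => (x, p.2)) ((1 : ℝ), (0 : ℝ)) p.1 :=
    (hasDerivAt_id p.1).prodMk (hasDerivAt_const p.1 p.2)
  exact (HasFDerivAt.comp_hasDerivAt p.1 (hu (p.1, p.2)).hasFDerivAt h).deriv

theorem pderivY_eq_fderiv {u : ℝ × ℝ → ℝ} (hu : Differentiable ℝ u) :
    pderivY u = fun p => fderiv ℝ u p (0, 1) := by
  funext p
  have h : HasDerivAt (fun y : ℝ => (p.1, y)) ((0 : ℝ), (1 : ℝ)) p.2 :=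
    (hasDerivAt_const p.2 p.1).prodMk (hasDerivAt_id p.2)
  exact (HasFDerivAt.comp_hasDerivAt p.2 (hu (p.1, p.2)).hasFDerivAt h).deriv

theorem contDiff_pderivX {n : ℕ} {u : ℝ × ℝ → ℝ} (hu : ContDiff ℝ (n + 1 : ℕ) u) :
    ContDiff ℝ n (pderivX u) := by
  rw [pderivX_eq_fderiv (hu.differentiable (by exact_mod_cast n.succ_ne_zero))]
  exact (hu.fderiv_right (m := n) (by norm_cast)).clm_apply contDiff_const

theorem contDiff_pderivY {n : ℕ} {u : ℝ × ℝ → ℝ} (hu : ContDiff ℝ (n + 1 : ℕ) u) :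
    ContDiff ℝ n (pderivY u) := by
  rw [pderivY_eq_fderiv (hu.differentiable (by exact_mod_cast n.succ_ne_zero))]
  exact (hu.fderiv_right (m := n) (by norm_cast)).clm_apply contDiff_const

theorem pderivX_pderivY_comm {u : ℝ × ℝ → ℝ} (hu : ContDiff ℝ 2 u) :
    pderivX (pderivY u) = pderivY (pderivX u) := by
  have hX : ContDiff ℝ 1 (pderivX u) := contDiff_pderivX (n := 1) hu
  have hY : ContDiff ℝ 1 (pderivY u) := contDiff_pderivY (n := 1) hu
  have hd : Differentiable ℝ u := hu.differentiable two_ne_zero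
  have hd2 : Differentiable ℝ (fderiv ℝ u) :=
    (hu.fderiv_right (m := 1) (by norm_num)).differentiable one_ne_zero
  rw [pderivX_eq_fderiv (hY.differentiable one_ne_zero),
    pderivY_eq_fderiv (hX.differentiable one_ne_zero)]
  funext p
  rw [pderivX_eq_fderiv hd, pderivY_eq_fderiv hd,
    fderiv_clm_apply (hd2 p) (differentiableAt_const _),
    fderiv_clm_apply (hd2 p) (differentiableAt_const _)]
  simpa using (hu.contDiffAt.isSymmSndFDerivAt (by simp)) (1, 0) (0, 1)

theorem contDiff_sliceX {n : WithTop ℕ∞} {u : ℝ × ℝ → ℝ} (hu : ContDiff ℝ n u) (y : ℝ) :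
    ContDiff ℝ n (fun x => u (x, y)) :=
  hu.comp (contDiff_id.prodMk contDiff_const)

theorem contDiff_sliceY {n : WithTop ℕ∞} {u : ℝ × ℝ → ℝ} (hu : ContDiff ℝ n u) (x : ℝ) :
    ContDiff ℝ n (fun y => u (x, y)) :=
  hu.comp (contDiff_const.prodMk contDiff_id)

theorem measurable_pderivX {f : ℝ × ℝ → ℝ} (hf : Continuous f) : Measurable (pderivX f) := by
  have h : Continuous (Function.uncurry fun (y x : ℝ) => f (x, y)) :=
    hf.comp continuous_swap
  exact (measurable_deriv_with_param h).comp measurable_swap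

theorem measurable_pderivY {f : ℝ × ℝ → ℝ} (hf : Continuous f) : Measurable (pderivY f) := by
  have h : Continuous (Function.uncurry fun (x y : ℝ) => f (x, y)) := hf
  exact measurable_deriv_with_param h

theorem isOpen_Omega2 : IsOpen Omega2 := isOpen_Ioo.prod isOpen_Ioo

theorem Omega2_subset_unitSquare : Omega2 ⊆ unitSquare :=
  Set.prod_mono Set.Ioo_subset_Icc_self Set.Ioo_subset_Icc_self

theorem isCompact_unitSquare : IsCompact unitSquare := isCompact_Icc.prod isCompact_Icc

theorem pderivX_eqOn {f g : ℝ × ℝ → ℝ} {s : Set (ℝ × ℝ)} (hs : IsOpen s) (h : Set.EqOn f g s) :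
    Set.EqOn (pderivX f) (pderivX g) s := by
  intro p hp
  refine Filter.EventuallyEq.deriv_eq ?_
  have hc : ContinuousAt (fun x : ℝ => (x, p.2)) p.1 := by fun_prop
  filter_upwards [hc.preimage_mem_nhds (hs.mem_nhds hp)] with x hx using h hx

theorem pderivY_eqOn {f g : ℝ × ℝ → ℝ} {s : Set (ℝ × ℝ)} (hs : IsOpen s) (h : Set.EqOn f g s) :
    Set.EqOn (pderivY f) (pderivY g) s := by
  intro p hp
  refine Filter.EventuallyEq.deriv_eq ?_
  have hc : ContinuousAt (fun y : ℝ => (p.1, y)) p.2 := by fun_prop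
  filter_upwards [hc.preimage_mem_nhds (hs.mem_nhds hp)] with y hy using h hy

/-! ### The `L²` seminorm with values in `[0, ∞]` -/

/-- The `L²(Ω)` seminorm with values in `[0, ∞]`. -/
def eL2 (f : ℝ × ℝ → ℝ) : ENNReal := eLpNorm f 2 (volume.restrict Omega2)

theorem eL2_sq (f : ℝ × ℝ → ℝ) : eL2 f ^ 2 = ∫⁻ p in Omega2, ENNReal.ofReal (f p ^ 2) := by
  have h : ∀ p, ENNReal.ofReal (f p ^ 2) = ‖f p‖ₑ ^ 2 := fun p => by
    rw [← sq_abs, ENNReal.ofReal_pow (abs_nonneg _), Real.enorm_eq_ofReal_abs]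
  simp_rw [h]
  rw [eL2, eLpNorm_eq_lintegral_rpow_enorm_toReal two_ne_zero ENNReal.ofNat_ne_top,
    ← ENNReal.rpow_natCast, ← ENNReal.rpow_mul]
  simp

theorem eL2_le_of_sq_le {f g : ℝ × ℝ → ℝ} {c : ℝ} (hc : 0 ≤ c)
    (h : ∫⁻ p in Omega2, ENNReal.ofReal (f p ^ 2) ≤
      ENNReal.ofReal (c ^ 2) * ∫⁻ p in Omega2, ENNReal.ofReal (g p ^ 2)) :
    eL2 f ≤ ENNReal.ofReal c * eL2 g := by
  rw [← ENNReal.pow_le_pow_left_iff two_ne_zero, mul_pow, eL2_sq, eL2_sq,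
    ← ENNReal.ofReal_pow hc]
  exact h

theorem volume_restrict_Omega2 :
    (volume.restrict Omega2 : Measure (ℝ × ℝ)) =
      (volume.restrict (Set.Ioo 0 1)).prod (volume.restrict (Set.Ioo 0 1)) := by
  rw [Measure.prod_restrict]
  rfl

theorem eL2_le_of_slicesX {f g : ℝ × ℝ → ℝ} {c : ℝ} (hc : 0 ≤ c) (hg : Continuous g)
    (h : ∀ y, ∫⁻ x in Set.Ioo (0 : ℝ) 1, ENNReal.ofReal (f (x, y) ^ 2) ≤
      ENNReal.ofReal (c ^ 2) * ∫⁻ x in Set.Ioo (0 : ℝ) 1, ENNReal.ofReal (g (x, y) ^ 2)) :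
    eL2 f ≤ ENNReal.ofReal c * eL2 g := by
  refine eL2_le_of_sq_le hc ?_
  have hm : Measurable fun p => ENNReal.ofReal (g p ^ 2) := by fun_prop
  rw [volume_restrict_Omega2, lintegral_prod_symm _ hm.aemeasurable, ← lintegral_prod_swap]
  refine (lintegral_prod_le _).trans ?_
  rw [← lintegral_const_mul _ hm.lintegral_prod_left']
  exact lintegral_mono fun y => h y

theorem eL2_le_of_slicesY {f g : ℝ × ℝ → ℝ} {c : ℝ} (hc : 0 ≤ c) (hg : Continuous g)
    (h : ∀ x, ∫⁻ y in Set.Ioo (0 : ℝ) 1, ENNReal.ofReal (f (x, y) ^ 2) ≤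
      ENNReal.ofReal (c ^ 2) * ∫⁻ y in Set.Ioo (0 : ℝ) 1, ENNReal.ofReal (g (x, y) ^ 2)) :
    eL2 f ≤ ENNReal.ofReal c * eL2 g := by
  refine eL2_le_of_sq_le hc ?_
  have hm : Measurable fun p => ENNReal.ofReal (g p ^ 2) := by fun_prop
  rw [volume_restrict_Omega2, lintegral_prod _ hm.aemeasurable]
  refine (lintegral_prod_le _).trans ?_
  rw [← lintegral_const_mul _ hm.lintegral_prod_right']
  exact lintegral_mono fun x => h x

theorem L2norm_nonneg (f : ℝ × ℝ → ℝ) : 0 ≤ L2norm f := Real.sqrt_nonneg _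

theorem eL2_eq_ofReal_L2norm {g : ℝ × ℝ → ℝ} (hg : Continuous g) :
    eL2 g = ENNReal.ofReal (L2norm g) := by
  have hsq_int : IntegrableOn (fun p => g p ^ 2) Omega2 :=
    ((hg.pow 2).continuousOn.integrableOn_compact isCompact_unitSquare).mono_set
      Omega2_subset_unitSquare
  have h0 : 0 ≤ ∫ p in Omega2, g p ^ 2 := integral_nonneg fun p => sq_nonneg _
  have h : eL2 g ^ 2 = ENNReal.ofReal (L2norm g) ^ 2 := by
    rw [eL2_sq, ← ENNReal.ofReal_pow (L2norm_nonneg g), L2norm, Real.sq_sqrt h0,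
      ofReal_integral_eq_lintegral_ofReal hsq_int (Filter.Eventually.of_forall fun p => sq_nonneg _)]
  exact le_antisymm ((ENNReal.pow_le_pow_left_iff two_ne_zero).1 h.le)
    ((ENNReal.pow_le_pow_left_iff two_ne_zero).1 h.ge)

theorem L2norm_congr {f g : ℝ × ℝ → ℝ} (h : Set.EqOn f g Omega2) : L2norm f = L2norm g := by
  unfold L2norm
  rw [setIntegral_congr_fun (g := fun p => g p ^ 2) isOpen_Omega2.measurableSet fun p hp => by
    simp only [h hp]]

/-! ### Directional interpolation errors -/

/-- The error of interpolation in the `x`-direction. -/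
def errX (N : ℕ) (v : ℝ × ℝ → ℝ) : ℝ × ℝ → ℝ := fun p => v p - interpX N v p

/-- The error of interpolation in the `y`-direction. -/
def errY (N : ℕ) (v : ℝ × ℝ → ℝ) : ℝ × ℝ → ℝ := fun p => v p - interpY N v p

section Directional

variable {N : ℕ} {v : ℝ × ℝ → ℝ}

theorem continuous_errX (hN : 0 < N) (hv : Continuous v) : Continuous (errX N v) := by
  unfold errX interpX
  refine hv.sub (continuous_finsetSum _ fun i _ => Continuous.mul (by fun_prop) ?_)
  exact (continuous_hat hN i).comp continuous_fst

theorem continuous_errY (hN : 0 < N) (hv : Continuous v) : Continuous (errY N v) := by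
  unfold errY interpY
  refine hv.sub (continuous_finsetSum _ fun i _ => Continuous.mul (by fun_prop) ?_)
  exact (continuous_hat hN i).comp continuous_snd

theorem errX_errY_comm (M N : ℕ) (v : ℝ × ℝ → ℝ) :
    errX M (errY N v) = errY N (errX M v) := by
  funext p
  simp only [errX, errY, interpX, interpY, sub_mul, Finset.sum_sub_distrib, Finset.sum_mul]
  rw [Finset.sum_comm]
  simp only [mul_right_comm]
  ring

theorem contDiff_errX_sliceY {n : WithTop ℕ∞} (hv : ContDiff ℝ n v) (x : ℝ) :
    ContDiff ℝ n (fun y => errX N v (x, y)) :=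
  (contDiff_sliceY hv x).sub
    (ContDiff.sum fun i _ => (contDiff_sliceY hv ((i : ℝ) / N)).mul
      (contDiff_const (c := hat N i x)))

theorem contDiff_errY_sliceX {n : WithTop ℕ∞} (hv : ContDiff ℝ n v) (y : ℝ) :
    ContDiff ℝ n (fun x => errY N v (x, y)) :=
  (contDiff_sliceX hv y).sub
    (ContDiff.sum fun i _ => (contDiff_sliceX hv ((i : ℝ) / N)).mul
      (contDiff_const (c := hat N i y)))

theorem pderivX_errY (hv : Differentiable ℝ v) : pderivX (errY N v) = errY N (pderivX v) := by
  have h : ∀ x y, HasDerivAt (fun x => v (x, y)) (pderivX v (x, y)) x := fun x y =>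
    (hv.comp (differentiable_id.prodMk (differentiable_const y)) x).hasDerivAt
  funext p
  exact ((h p.1 p.2).fun_sub
    (HasDerivAt.fun_sum fun (i : ℕ) _ => (h p.1 ((i : ℝ) / N)).mul_const (hat N i p.2))).deriv

theorem pderivY_errX (hv : Differentiable ℝ v) : pderivY (errX N v) = errX N (pderivY v) := by
  have h : ∀ x y, HasDerivAt (fun y => v (x, y)) (pderivY v (x, y)) y := fun x y =>
    (hv.comp ((differentiable_const x).prodMk differentiable_id) y).hasDerivAt
  funext p
  exact ((h p.1 p.2).fun_sub
    (HasDerivAt.fun_sum fun (i : ℕ) _ => (h ((i : ℝ) / N) p.2).mul_const (hat N i p.1))).deriv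

theorem eL2_errX_le_pderivX (hN : 0 < N) (hv : ∀ y, ContDiff ℝ 1 fun x => v (x, y))
    (hc : Continuous (pderivX v)) :
    eL2 (errX N v) ≤ ENNReal.ofReal (N : ℝ)⁻¹ * eL2 (pderivX v) := by
  refine eL2_le_of_slicesX (by positivity) hc fun y => ?_
  rw [← one_mul ((N : ℝ)⁻¹ ^ 2)]
  exact lintegral_sq_le_of_cells hN (c := 1) (f := fun x => errX N v (x, y))
    ((hv y).continuous_deriv le_rfl) zero_le_one fun i hi x hx => by
      rw [one_mul]
      exact sq_sub_linInterp_le_deriv hi (hv y) (Set.Ioo_subset_Icc_self hx)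

theorem eL2_errY_le_pderivY (hN : 0 < N) (hv : ∀ x, ContDiff ℝ 1 fun y => v (x, y))
    (hc : Continuous (pderivY v)) :
    eL2 (errY N v) ≤ ENNReal.ofReal (N : ℝ)⁻¹ * eL2 (pderivY v) := by
  refine eL2_le_of_slicesY (by positivity) hc fun x => ?_
  rw [← one_mul ((N : ℝ)⁻¹ ^ 2)]
  exact lintegral_sq_le_of_cells hN (c := 1) (f := fun y => errY N v (x, y))
    ((hv x).continuous_deriv le_rfl) zero_le_one fun i hi y hy => by
      rw [one_mul]
      exact sq_sub_linInterp_le_deriv hi (hv x) (Set.Ioo_subset_Icc_self hy)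

theorem continuous_deriv_deriv {g : ℝ → ℝ} (hg : ContDiff ℝ 2 g) : Continuous (deriv (deriv g)) :=
  (ContDiff.deriv' (n := 1) (by simpa [one_add_one_eq_two] using hg)).continuous_deriv le_rfl

theorem eL2_pderivX_errX_le (hN : 0 < N) (hv : ∀ y, ContDiff ℝ 2 fun x => v (x, y))
    (hc : Continuous (pderivX (pderivX v))) :
    eL2 (pderivX (errX N v)) ≤ ENNReal.ofReal (N : ℝ)⁻¹ * eL2 (pderivX (pderivX v)) := by
  refine eL2_le_of_slicesX (by positivity) hc fun y => ?_
  rw [← one_mul ((N : ℝ)⁻¹ ^ 2)]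
  exact lintegral_sq_le_of_cells hN (c := 1) (f := fun x => pderivX (errX N v) (x, y))
    (continuous_deriv_deriv (hv y)) zero_le_one fun i hi x hx => by
      rw [one_mul]
      exact sq_deriv_sub_linInterp_le hi (hv y) hx

theorem eL2_pderivY_errY_le (hN : 0 < N) (hv : ∀ x, ContDiff ℝ 2 fun y => v (x, y))
    (hc : Continuous (pderivY (pderivY v))) :
    eL2 (pderivY (errY N v)) ≤ ENNReal.ofReal (N : ℝ)⁻¹ * eL2 (pderivY (pderivY v)) := by
  refine eL2_le_of_slicesY (by positivity) hc fun x => ?_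
  rw [← one_mul ((N : ℝ)⁻¹ ^ 2)]
  exact lintegral_sq_le_of_cells hN (c := 1) (f := fun y => pderivY (errY N v) (x, y))
    (continuous_deriv_deriv (hv x)) zero_le_one fun i hi y hy => by
      rw [one_mul]
      exact sq_deriv_sub_linInterp_le hi (hv x) hy

theorem eL2_errX_le (hN : 0 < N) (hv : ∀ y, ContDiff ℝ 2 fun x => v (x, y))
    (hc : Continuous (pderivX (pderivX v))) :
    eL2 (errX N v) ≤ ENNReal.ofReal ((N : ℝ)⁻¹ ^ 2) * eL2 (pderivX (pderivX v)) := by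
  refine eL2_le_of_slicesX (by positivity) hc fun y => ?_
  rw [sq ((N : ℝ)⁻¹ ^ 2)]
  exact lintegral_sq_le_of_cells hN (f := fun x => errX N v (x, y))
    (continuous_deriv_deriv (hv y)) (by positivity) fun i hi x hx =>
      sq_sub_linInterp_le_deriv_deriv hi (hv y) (Set.Ioo_subset_Icc_self hx)

theorem eL2_errY_le (hN : 0 < N) (hv : ∀ x, ContDiff ℝ 2 fun y => v (x, y))
    (hc : Continuous (pderivY (pderivY v))) :
    eL2 (errY N v) ≤ ENNReal.ofReal ((N : ℝ)⁻¹ ^ 2) * eL2 (pderivY (pderivY v)) := by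
  refine eL2_le_of_slicesY (by positivity) hc fun x => ?_
  rw [sq ((N : ℝ)⁻¹ ^ 2)]
  exact lintegral_sq_le_of_cells hN (f := fun y => errY N v (x, y))
    (continuous_deriv_deriv (hv x)) (by positivity) fun i hi y hy =>
      sq_sub_linInterp_le_deriv_deriv hi (hv x) (Set.Ioo_subset_Icc_self hy)

end Directional

/-! ### Broken `H¹` norms -/

/-- Continuous functions whose slices through points of `Ω` with irrational coordinates are
differentiable there; this covers every interpolation error on a mesh with rational nodes. -/
structure SliceDifferentiable (f : ℝ × ℝ → ℝ) : Prop where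
  continuous : Continuous f
  differentiableX : ∀ p ∈ Omega2, Irrational p.1 → DifferentiableAt ℝ (fun x => f (x, p.2)) p.1
  differentiableY : ∀ p ∈ Omega2, Irrational p.2 → DifferentiableAt ℝ (fun y => f (p.1, y)) p.2

/-- The `[0, ∞]`-valued seminorm `‖∂ₓf‖ + ‖∂_y f‖ + ‖f‖`. -/
def eH1 (f : ℝ × ℝ → ℝ) : ENNReal := eL2 (pderivX f) + eL2 (pderivY f) + eL2 f

theorem ae_irrational : ∀ᵐ x : ℝ, Irrational x := by
  filter_upwards [(Set.countable_range ((↑) : ℚ → ℝ)).ae_notMem volume] with x hx using hx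

theorem ae_irrational_fst : ∀ᵐ p ∂(volume.restrict Omega2), p ∈ Omega2 ∧ Irrational p.1 := by
  have h' : ∀ᵐ p : ℝ × ℝ, Irrational p.1 := Measure.quasiMeasurePreserving_fst.ae ae_irrational
  filter_upwards [ae_restrict_mem isOpen_Omega2.measurableSet, ae_restrict_of_ae h'] with p hp hp'
  exact ⟨hp, hp'⟩

theorem ae_irrational_snd : ∀ᵐ p ∂(volume.restrict Omega2), p ∈ Omega2 ∧ Irrational p.2 := by
  have h' : ∀ᵐ p : ℝ × ℝ, Irrational p.2 := Measure.quasiMeasurePreserving_snd.ae ae_irrational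
  filter_upwards [ae_restrict_mem isOpen_Omega2.measurableSet, ae_restrict_of_ae h'] with p hp hp'
  exact ⟨hp, hp'⟩

namespace SliceDifferentiable

variable {f g : ℝ × ℝ → ℝ}

theorem add (hf : SliceDifferentiable f) (hg : SliceDifferentiable g) :
    SliceDifferentiable fun p => f p + g p where
  continuous := hf.continuous.add hg.continuous
  differentiableX p hp hi := (hf.differentiableX p hp hi).fun_add (hg.differentiableX p hp hi)
  differentiableY p hp hi := (hf.differentiableY p hp hi).fun_add (hg.differentiableY p hp hi)

theorem neg (hf : SliceDifferentiable f) : SliceDifferentiable fun p => -f p where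
  continuous := hf.continuous.neg
  differentiableX p hp hi := (hf.differentiableX p hp hi).fun_neg
  differentiableY p hp hi := (hf.differentiableY p hp hi).fun_neg

theorem sum {ι : Type*} {s : Finset ι} {F : ι → ℝ × ℝ → ℝ}
    (h : ∀ i ∈ s, SliceDifferentiable (F i)) : SliceDifferentiable fun p => ∑ i ∈ s, F i p where
  continuous := continuous_finsetSum _ fun i hi => (h i hi).continuous
  differentiableX p hp hirr :=
    DifferentiableAt.fun_sum fun i hi => (h i hi).differentiableX p hp hirr
  differentiableY p hp hirr :=
    DifferentiableAt.fun_sum fun i hi => (h i hi).differentiableY p hp hirr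

theorem errX {N : ℕ} (hN : 0 < N) (hf : SliceDifferentiable f)
    (hY : ∀ x, Differentiable ℝ fun y => f (x, y)) : SliceDifferentiable (errX N f) where
  continuous := continuous_errX hN hf.continuous
  differentiableX p hp hi := (hf.differentiableX p hp hi).fun_sub
    (differentiableAt_linInterp hN (fun x => f (x, p.2)) hp.1 hi)
  differentiableY p _ _ := (hY p.1 p.2).fun_sub
    (DifferentiableAt.fun_sum fun (i : ℕ) _ =>
      (hY ((i : ℝ) / N) p.2).mul (differentiableAt_const (hat N i p.1)))

theorem errY {N : ℕ} (hN : 0 < N) (hf : SliceDifferentiable f)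
    (hX : ∀ y, Differentiable ℝ fun x => f (x, y)) : SliceDifferentiable (errY N f) where
  continuous := continuous_errY hN hf.continuous
  differentiableX p _ _ := (hX p.2 p.1).fun_sub
    (DifferentiableAt.fun_sum fun (i : ℕ) _ =>
      (hX ((i : ℝ) / N) p.1).mul (differentiableAt_const (hat N i p.2)))
  differentiableY p hp hi := (hf.differentiableY p hp hi).fun_sub
    (differentiableAt_linInterp hN (fun y => f (p.1, y)) hp.2 hi)

theorem of_contDiff (hf : ContDiff ℝ 1 f) : SliceDifferentiable f where
  continuous := hf.continuous
  differentiableX p _ _ := ((contDiff_sliceX hf p.2).differentiable one_ne_zero) p.1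
  differentiableY p _ _ := ((contDiff_sliceY hf p.1).differentiable one_ne_zero) p.2

theorem errX_errY {M N : ℕ} (hM : 0 < M) (hN : 0 < N) (hf : ContDiff ℝ 1 f) :
    SliceDifferentiable (_root_.errX M (_root_.errY N f)) where
  continuous := continuous_errX hM (continuous_errY hN hf.continuous)
  differentiableX p hp hi :=
    ((contDiff_errY_sliceX hf p.2).differentiable one_ne_zero p.1).fun_sub
      (differentiableAt_linInterp hM (fun x => _root_.errY N f (x, p.2)) hp.1 hi)
  differentiableY p hp hi := by
    rw [errX_errY_comm]
    exact ((contDiff_errX_sliceY hf p.1).differentiable one_ne_zero p.2).fun_sub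
      (differentiableAt_linInterp hN (fun y => _root_.errX M f (p.1, y)) hp.2 hi)

theorem eH1_add_le (hf : SliceDifferentiable f) (hg : SliceDifferentiable g) :
    eH1 (fun p => f p + g p) ≤ eH1 f + eH1 g := by
  have hX : eL2 (pderivX fun p => f p + g p) ≤ eL2 (pderivX f) + eL2 (pderivX g) := by
    refine le_trans (eLpNorm_congr_ae (g := pderivX f + pderivX g) ?_).le
      (eLpNorm_add_le (measurable_pderivX hf.continuous).aestronglyMeasurable
        (measurable_pderivX hg.continuous).aestronglyMeasurable one_le_two)
    filter_upwards [ae_irrational_fst] with p hp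
    exact deriv_fun_add (hf.differentiableX p hp.1 hp.2) (hg.differentiableX p hp.1 hp.2)
  have hY : eL2 (pderivY fun p => f p + g p) ≤ eL2 (pderivY f) + eL2 (pderivY g) := by
    refine le_trans (eLpNorm_congr_ae (g := pderivY f + pderivY g) ?_).le
      (eLpNorm_add_le (measurable_pderivY hf.continuous).aestronglyMeasurable
        (measurable_pderivY hg.continuous).aestronglyMeasurable one_le_two)
    filter_upwards [ae_irrational_snd] with p hp
    exact deriv_fun_add (hf.differentiableY p hp.1 hp.2) (hg.differentiableY p hp.1 hp.2)
  have h0 : eL2 (fun p => f p + g p) ≤ eL2 f + eL2 g :=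
    eLpNorm_add_le hf.continuous.aestronglyMeasurable hg.continuous.aestronglyMeasurable
      one_le_two
  calc eH1 (fun p => f p + g p)
      ≤ (eL2 (pderivX f) + eL2 (pderivX g)) + (eL2 (pderivY f) + eL2 (pderivY g)) +
          (eL2 f + eL2 g) := add_le_add (add_le_add hX hY) h0
    _ = eH1 f + eH1 g := by unfold eH1; ring

end SliceDifferentiable

theorem eH1_neg (f : ℝ × ℝ → ℝ) : eH1 (fun p => -f p) = eH1 f := by
  have hX : pderivX (fun p => -f p) = -pderivX f := funext fun p => deriv.fun_neg
  have hY : pderivY (fun p => -f p) = -pderivY f := funext fun p => deriv.fun_neg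
  unfold eH1 eL2
  rw [hX, hY, eLpNorm_neg, eLpNorm_neg]
  congr 1
  exact eLpNorm_neg f 2 _

theorem eH1_zero : eH1 (fun _ => 0) = 0 := by
  have hX : pderivX (fun _ => 0) = 0 := funext fun p => deriv_const _ _
  have hY : pderivY (fun _ => 0) = 0 := funext fun p => deriv_const _ _
  unfold eH1 eL2
  rw [hX, hY]
  simp

theorem eH1_sum_le {ι : Type*} {s : Finset ι} {F : ι → ℝ × ℝ → ℝ}
    (h : ∀ i ∈ s, SliceDifferentiable (F i)) :
    eH1 (fun p => ∑ i ∈ s, F i p) ≤ ∑ i ∈ s, eH1 (F i) := by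
  classical
  induction s using Finset.induction_on with
  | empty => simp [eH1_zero]
  | insert a s ha ih =>
    simp only [Finset.sum_insert ha]
    have hs : ∀ i ∈ s, SliceDifferentiable (F i) := fun i hi => h i (mem_insert_of_mem hi)
    exact ((h a (mem_insert_self a s)).eH1_add_le (SliceDifferentiable.sum hs)).trans
      (add_le_add le_rfl (ih hs))

theorem energyNorm_le_of_eH1_le {f : ℝ × ℝ → ℝ} (hf : Continuous f) {R : ℝ} (hR : 0 ≤ R)
    (h : eH1 f ≤ ENNReal.ofReal R) : energyNorm f ≤ R := by
  refine Real.sqrt_le_iff.2 ⟨hR, ?_⟩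
  have hX := measurable_pderivX hf
  have hY := measurable_pderivY hf
  have key : ∫⁻ p in Omega2, ENNReal.ofReal (pderivX f p ^ 2 + pderivY f p ^ 2 + f p ^ 2) ≤
      ENNReal.ofReal (R ^ 2) := by
    calc ∫⁻ p in Omega2, ENNReal.ofReal (pderivX f p ^ 2 + pderivY f p ^ 2 + f p ^ 2)
        = ∫⁻ p in Omega2, (ENNReal.ofReal (pderivX f p ^ 2) + ENNReal.ofReal (pderivY f p ^ 2) +
            ENNReal.ofReal (f p ^ 2)) := by
          congr with p
          rw [ENNReal.ofReal_add (by positivity) (by positivity),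
            ENNReal.ofReal_add (by positivity) (by positivity)]
      _ = eL2 (pderivX f) ^ 2 + eL2 (pderivY f) ^ 2 + eL2 f ^ 2 := by
          rw [lintegral_add_left (by fun_prop), lintegral_add_left (by fun_prop), eL2_sq, eL2_sq,
            eL2_sq]
      _ ≤ (eL2 (pderivX f) ^ 2 + eL2 (pderivY f) ^ 2 + eL2 f ^ 2) +
            (2 * eL2 (pderivX f) * eL2 (pderivY f) + 2 * eL2 (pderivX f) * eL2 f +
              2 * eL2 (pderivY f) * eL2 f) := le_self_add
      _ = eH1 f ^ 2 := by unfold eH1; ring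
      _ ≤ ENNReal.ofReal R ^ 2 := by gcongr
      _ = ENNReal.ofReal (R ^ 2) := (ENNReal.ofReal_pow hR 2).symm
  rw [integral_eq_lintegral_of_nonneg_ae
    (Filter.Eventually.of_forall fun p => by positivity)
    (Measurable.aestronglyMeasurable (by fun_prop))]
  exact ENNReal.toReal_le_of_le_ofReal (sq_nonneg R) key

/-! ### Error of the multiscale interpolant -/

theorem interp_eq_interpX_interpY (M N : ℕ) (u : ℝ × ℝ → ℝ) :
    interp M N u = interpX M (interpY N u) := by
  funext p
  simp only [interp, interpX, interpY, Finset.sum_mul]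
  exact sum_congr rfl fun i _ => sum_congr rfl fun j _ => by ring

theorem interp_eq_sub_errors (M N : ℕ) (u : ℝ × ℝ → ℝ) (p : ℝ × ℝ) :
    interp M N u p = u p - errX M u p - errY N u p + errX M (errY N u) p := by
  rw [interp_eq_interpX_interpY]
  have h : interpX M (errY N u) p = interpX M u p - interpX M (interpY N u) p := by
    simp only [interpX, errY, sub_mul, Finset.sum_sub_distrib]
  simp only [errX, h]
  simp only [errY]
  ring

theorem sub_msInterp_eq (n k : ℕ) (u : ℝ × ℝ → ℝ) (p : ℝ × ℝ) :
    u p - msInterp n k u p = errX n u p + errY n u p +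
      (-∑ i ∈ range (k + 1), errX (n / 2 ^ i) (errY (n / 2 ^ (k - i)) u) p) +
      ∑ i ∈ range k, errX (n / 2 ^ (i + 1)) (errY (n / 2 ^ (k - i)) u) p := by
  have hIcc : ∑ i ∈ Finset.Icc 1 k, interp (n / 2 ^ i) (n / 2 ^ (k + 1 - i)) u p =
      ∑ i ∈ range k, interp (n / 2 ^ (i + 1)) (n / 2 ^ (k - i)) u p := by
    rw [← Finset.Ico_add_one_right_eq_Icc, Finset.sum_Ico_eq_sum_range]
    refine sum_congr (by simp) fun i _ => ?_
    rw [add_comm 1 i, Nat.add_sub_add_right]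
  have hX : ∑ i ∈ range (k + 1), errX (n / 2 ^ i) u p =
      ∑ i ∈ range k, errX (n / 2 ^ (i + 1)) u p + errX n u p := by
    rw [Finset.sum_range_succ']
    simp
  have hY : ∑ i ∈ range (k + 1), errY (n / 2 ^ (k - i)) u p =
      ∑ i ∈ range k, errY (n / 2 ^ (k - i)) u p + errY n u p := by
    rw [Finset.sum_range_succ]
    simp
  simp only [msInterp]
  rw [hIcc]
  simp only [interp_eq_sub_errors, Finset.sum_add_distrib, Finset.sum_sub_distrib, hX, hY]
  simp only [Finset.sum_const, card_range, nsmul_eq_mul]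
  push_cast
  ring

section ErrorBounds

variable {u : ℝ × ℝ → ℝ} {M N : ℕ}

theorem inv_natCast_le_one (hN : 0 < N) : (N : ℝ)⁻¹ ≤ 1 :=
  inv_le_one_of_one_le₀ (by exact_mod_cast hN)

theorem ofReal_inv_sq_le (hN : 0 < N) :
    ENNReal.ofReal ((N : ℝ)⁻¹ ^ 2) ≤ ENNReal.ofReal (N : ℝ)⁻¹ :=
  ENNReal.ofReal_le_ofReal
    (pow_le_of_le_one (by positivity) (inv_natCast_le_one hN) two_ne_zero)

theorem eH1_errX_le (hu : ContDiff ℝ 2 u) (hN : 0 < N) :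
    eH1 (errX N u) ≤ ENNReal.ofReal (N : ℝ)⁻¹ *
      (2 * eL2 (pderivX (pderivX u)) + eL2 (pderivX (pderivY u))) := by
  have hY : ContDiff ℝ 1 (pderivY u) := contDiff_pderivY (n := 1) hu
  have hXX : ContDiff ℝ 0 (pderivX (pderivX u)) :=
    contDiff_pderivX (n := 0) (contDiff_pderivX (n := 1) hu)
  have hXY : ContDiff ℝ 0 (pderivX (pderivY u)) := contDiff_pderivX (n := 0) hY
  have h1 := eL2_pderivX_errX_le hN (contDiff_sliceX hu) hXX.continuous
  have h2 := eL2_errX_le_pderivX hN (contDiff_sliceX hY) hXY.continuous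
  rw [← pderivY_errX (hu.differentiable two_ne_zero)] at h2
  have h3 := (eL2_errX_le hN (contDiff_sliceX hu) hXX.continuous).trans
    (mul_le_mul_left (ofReal_inv_sq_le hN) _)
  exact (add_le_add (add_le_add h1 h2) h3).trans_eq (by ring)

theorem eH1_errY_le (hu : ContDiff ℝ 2 u) (hN : 0 < N) :
    eH1 (errY N u) ≤ ENNReal.ofReal (N : ℝ)⁻¹ *
      (2 * eL2 (pderivY (pderivY u)) + eL2 (pderivX (pderivY u))) := by
  have hX : ContDiff ℝ 1 (pderivX u) := contDiff_pderivX (n := 1) hu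
  have hYY : ContDiff ℝ 0 (pderivY (pderivY u)) :=
    contDiff_pderivY (n := 0) (contDiff_pderivY (n := 1) hu)
  have hYX : ContDiff ℝ 0 (pderivY (pderivX u)) := contDiff_pderivY (n := 0) hX
  have h1 := eL2_errY_le_pderivY hN (contDiff_sliceY hX) hYX.continuous
  rw [← pderivX_errY (hu.differentiable two_ne_zero), ← pderivX_pderivY_comm hu] at h1
  have h2 := eL2_pderivY_errY_le hN (contDiff_sliceY hu) hYY.continuous
  have h3 := (eL2_errY_le hN (contDiff_sliceY hu) hYY.continuous).trans
    (mul_le_mul_left (ofReal_inv_sq_le hN) _)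
  exact (add_le_add (add_le_add h1 h2) h3).trans_eq (by ring)

theorem pderivY_pderivY_pderivX_pderivX (hu : ContDiff ℝ 4 u) :
    pderivY (pderivY (pderivX (pderivX u))) = uxxyy u := by
  have hX : ContDiff ℝ 3 (pderivX u) := contDiff_pderivX (n := 3) hu
  have hY : ContDiff ℝ 3 (pderivY u) := contDiff_pderivY (n := 3) hu
  have hXY : ContDiff ℝ 2 (pderivX (pderivY u)) := contDiff_pderivX (n := 2) hY
  rw [uxxyy, ← pderivX_pderivY_comm (hX.of_le (by norm_num)),
    ← pderivX_pderivY_comm (hu.of_le (by norm_num)), ← pderivX_pderivY_comm hXY,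
    ← pderivX_pderivY_comm (hY.of_le (by norm_num))]

theorem eH1_errX_errY_le (hu : ContDiff ℝ 4 u) (hM : 0 < M) (hN : 0 < N) :
    eH1 (errX M (errY N u)) ≤ ENNReal.ofReal
      (2 * ((M : ℝ)⁻¹ * (N : ℝ)⁻¹ ^ 2) + (M : ℝ)⁻¹ ^ 2 * (N : ℝ)⁻¹) * eL2 (uxxyy u) := by
  have hu2 : ContDiff ℝ 2 u := hu.of_le (by norm_num)
  have hX : ContDiff ℝ 3 (pderivX u) := contDiff_pderivX (n := 3) hu
  have hY : ContDiff ℝ 3 (pderivY u) := contDiff_pderivY (n := 3) hu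
  have hXX : ContDiff ℝ 2 (pderivX (pderivX u)) := contDiff_pderivX (n := 2) hX
  have hYY : ContDiff ℝ 2 (pderivY (pderivY u)) := contDiff_pderivY (n := 2) hY
  have hQ : ContDiff ℝ 0 (uxxyy u) := contDiff_pderivX (n := 0) (contDiff_pderivX (n := 1) hYY)
  have hcomm := pderivY_pderivY_pderivX_pderivX hu
  have eXX : pderivX (pderivX (errY N u)) = errY N (pderivX (pderivX u)) := by
    rw [pderivX_errY (hu.differentiable (by norm_num)),
      pderivX_errY (hX.differentiable (by norm_num))]
  have eYY : pderivY (pderivY (errX M u)) = errX M (pderivY (pderivY u)) := by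
    rw [pderivY_errX (hu.differentiable (by norm_num)),
      pderivY_errX (hY.differentiable (by norm_num))]
  have cXX : Continuous (pderivX (pderivX (errY N u))) := by
    rw [eXX]; exact continuous_errY hN hXX.continuous
  have cYY : Continuous (pderivY (pderivY (errX M u))) := by
    rw [eYY]; exact continuous_errX hM hYY.continuous
  have bXX : eL2 (pderivX (pderivX (errY N u))) ≤
      ENNReal.ofReal ((N : ℝ)⁻¹ ^ 2) * eL2 (uxxyy u) := by
    rw [eXX, ← hcomm]
    exact eL2_errY_le hN (contDiff_sliceY hXX) (hcomm ▸ hQ.continuous)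
  have bYY : eL2 (pderivY (pderivY (errX M u))) ≤
      ENNReal.ofReal ((M : ℝ)⁻¹ ^ 2) * eL2 (uxxyy u) := by
    rw [eYY]
    exact eL2_errX_le hM (contDiff_sliceX hYY) hQ.continuous
  have h1 : eL2 (pderivX (errX M (errY N u))) ≤
      ENNReal.ofReal (M : ℝ)⁻¹ * (ENNReal.ofReal ((N : ℝ)⁻¹ ^ 2) * eL2 (uxxyy u)) :=
    (eL2_pderivX_errX_le hM (contDiff_errY_sliceX hu2) cXX).trans (by gcongr)
  have h2 : eL2 (pderivY (errX M (errY N u))) ≤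
      ENNReal.ofReal (N : ℝ)⁻¹ * (ENNReal.ofReal ((M : ℝ)⁻¹ ^ 2) * eL2 (uxxyy u)) := by
    rw [errX_errY_comm]
    exact (eL2_pderivY_errY_le hN (contDiff_errX_sliceY hu2) cYY).trans (by gcongr)
  have h3 : eL2 (errX M (errY N u)) ≤
      ENNReal.ofReal (M : ℝ)⁻¹ * (ENNReal.ofReal ((N : ℝ)⁻¹ ^ 2) * eL2 (uxxyy u)) :=
    (eL2_errX_le hM (contDiff_errY_sliceX hu2) cXX).trans
      (mul_le_mul' (ofReal_inv_sq_le hM) bXX)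
  refine (add_le_add (add_le_add h1 h2) h3).trans_eq ?_
  rw [ENNReal.ofReal_add (by positivity) (by positivity), ENNReal.ofReal_mul (by positivity),
    ENNReal.ofReal_mul (by positivity), ENNReal.ofReal_mul (by positivity), ENNReal.ofReal_ofNat]
  ring

end ErrorBounds

theorem inv_natCast_two_pow_div {m i : ℕ} (hi : i ≤ m) :
    (((2 ^ m / 2 ^ i : ℕ) : ℝ))⁻¹ = 2 ^ i * ((2 : ℝ) ^ m)⁻¹ := by
  rw [Nat.cast_div (pow_dvd_pow 2 hi) (by positivity)]
  push_cast
  rw [inv_div, div_eq_mul_inv]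

theorem two_pow_sub_eq {k i : ℕ} (hi : i ≤ k) : (2 : ℝ) ^ (k - i) = 2 ^ k * (1 / 2) ^ i := by
  rw [pow_sub₀ _ two_ne_zero hi, one_div, inv_pow]

theorem sum_two_pow_le (n : ℕ) : ∑ i ∈ range n, (2 : ℝ) ^ i ≤ 2 ^ n := by
  rw [geom_sum_eq (by norm_num)]
  norm_num

theorem sum_diagonal_weights_le (k : ℕ) {H : ℝ} (hH : 0 ≤ H) :
    ∑ i ∈ range (k + 1), (2 * ((2 ^ i * H) * (2 ^ (k - i) * H) ^ 2) +
      (2 ^ i * H) ^ 2 * (2 ^ (k - i) * H)) ≤ 6 * 4 ^ k * H ^ 3 := by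
  have h4 : (4 : ℝ) ^ k = 2 ^ k * 2 ^ k := by rw [← mul_pow]; norm_num
  have hterm : ∀ i ∈ range (k + 1), 2 * ((2 ^ i * H) * (2 ^ (k - i) * H) ^ 2) +
      (2 ^ i * H) ^ 2 * (2 ^ (k - i) * H) =
      H ^ 3 * (2 * 4 ^ k * (1 / 2 : ℝ) ^ i + 2 ^ k * 2 ^ i) := by
    intro i hi
    rw [two_pow_sub_eq (Nat.lt_succ_iff.1 (mem_range.1 hi)), h4]
    have : (2 : ℝ) ^ i * (1 / 2) ^ i = 1 := by rw [← mul_pow]; norm_num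
    linear_combination (H ^ 3 * 2 * 2 ^ k * 2 ^ k * (1 / 2 : ℝ) ^ i + H ^ 3 * 2 ^ k * 2 ^ i) * this
  rw [sum_congr rfl hterm, ← mul_sum, sum_add_distrib, ← mul_sum, ← mul_sum]
  have h1 := sum_geometric_two_le (k + 1)
  have h2 := sum_two_pow_le (k + 1)
  calc H ^ 3 * (2 * 4 ^ k * ∑ i ∈ range (k + 1), (1 / 2 : ℝ) ^ i +
        2 ^ k * ∑ i ∈ range (k + 1), (2 : ℝ) ^ i)
      ≤ H ^ 3 * (2 * 4 ^ k * 2 + 2 ^ k * 2 ^ (k + 1)) := by gcongr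
    _ = 6 * 4 ^ k * H ^ 3 := by rw [pow_succ, h4]; ring

theorem sum_superdiagonal_weights_le (k : ℕ) {H : ℝ} (hH : 0 ≤ H) :
    ∑ i ∈ range k, (2 * ((2 ^ (i + 1) * H) * (2 ^ (k - i) * H) ^ 2) +
      (2 ^ (i + 1) * H) ^ 2 * (2 ^ (k - i) * H)) ≤ 12 * 4 ^ k * H ^ 3 := by
  have h4 : (4 : ℝ) ^ k = 2 ^ k * 2 ^ k := by rw [← mul_pow]; norm_num
  have hterm : ∀ i ∈ range k, 2 * ((2 ^ (i + 1) * H) * (2 ^ (k - i) * H) ^ 2) +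
      (2 ^ (i + 1) * H) ^ 2 * (2 ^ (k - i) * H) =
      H ^ 3 * (4 * 4 ^ k * (1 / 2 : ℝ) ^ i + 4 * 2 ^ k * 2 ^ i) := by
    intro i hi
    rw [two_pow_sub_eq (mem_range.1 hi).le, h4, pow_succ]
    have : (2 : ℝ) ^ i * (1 / 2) ^ i = 1 := by rw [← mul_pow]; norm_num
    linear_combination
      (H ^ 3 * 4 * 2 ^ k * 2 ^ k * (1 / 2 : ℝ) ^ i + 4 * H ^ 3 * 2 ^ k * 2 ^ i) * this
  rw [sum_congr rfl hterm, ← mul_sum, sum_add_distrib, ← mul_sum, ← mul_sum]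
  have h1 := sum_geometric_two_le k
  have h2 := sum_two_pow_le k
  calc H ^ 3 * (4 * 4 ^ k * ∑ i ∈ range k, (1 / 2 : ℝ) ^ i +
        4 * 2 ^ k * ∑ i ∈ range k, (2 : ℝ) ^ i)
      ≤ H ^ 3 * (4 * 4 ^ k * 2 + 4 * 2 ^ k * 2 ^ k) := by gcongr
    _ = 12 * 4 ^ k * H ^ 3 := by rw [h4]; ring

theorem energyNorm_sub_msInterp_le {m k : ℕ} (hkm : k ≤ m) {u : ℝ × ℝ → ℝ}
    (hu : ContDiff ℝ 4 u) :
    energyNorm (fun p => u p - msInterp (2 ^ m) k u p) ≤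
      5 * (((2 : ℝ) ^ m)⁻¹ * semi2 u +
        4 ^ (k + 1) * (((2 : ℝ) ^ m) ^ 3)⁻¹ * L2norm (uxxyy u)) := by
  have hu1 : ContDiff ℝ 1 u := hu.of_le (by norm_num)
  have hu2 : ContDiff ℝ 2 u := hu.of_le (by norm_num)
  have hX : ContDiff ℝ 3 (pderivX u) := contDiff_pderivX (n := 3) hu
  have hY : ContDiff ℝ 3 (pderivY u) := contDiff_pderivY (n := 3) hu
  have hXX : ContDiff ℝ 2 (pderivX (pderivX u)) := contDiff_pderivX (n := 2) hX
  have hXY : ContDiff ℝ 2 (pderivX (pderivY u)) := contDiff_pderivX (n := 2) hY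
  have hYY : ContDiff ℝ 2 (pderivY (pderivY u)) := contDiff_pderivY (n := 2) hY
  have hQ : ContDiff ℝ 0 (uxxyy u) := contDiff_pderivX (n := 0) (contDiff_pderivX (n := 1) hYY)
  have hpos : ∀ i ≤ m, 0 < 2 ^ m / 2 ^ i := fun i hi =>
    Nat.div_pos (Nat.pow_le_pow_right two_pos hi) (by positivity)
  have hN : 0 < 2 ^ m := by positivity
  have sE : SliceDifferentiable u := .of_contDiff hu1
  have sX : SliceDifferentiable (errX (2 ^ m) u) :=
    sE.errX hN fun x => (contDiff_sliceY hu1 x).differentiable one_ne_zero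
  have sY : SliceDifferentiable (errY (2 ^ m) u) :=
    sE.errY hN fun y => (contDiff_sliceX hu1 y).differentiable one_ne_zero
  have sD : ∀ i ∈ range (k + 1),
      SliceDifferentiable (errX (2 ^ m / 2 ^ i) (errY (2 ^ m / 2 ^ (k - i)) u)) := fun i hi =>
    .errX_errY (hpos i (by have := mem_range.1 hi; omega)) (hpos _ (by omega)) hu1
  have sS : ∀ i ∈ range k,
      SliceDifferentiable (errX (2 ^ m / 2 ^ (i + 1)) (errY (2 ^ m / 2 ^ (k - i)) u)) :=
    fun i hi => .errX_errY (hpos _ (by have := mem_range.1 hi; omega)) (hpos _ (by omega)) hu1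
  set H : ℝ := ((2 : ℝ) ^ m)⁻¹ with hH
  have hH0 : 0 ≤ H := by positivity
  have hcast : (((2 ^ m : ℕ) : ℝ))⁻¹ = H := by rw [hH]; push_cast; rfl
  have bX := eH1_errX_le hu2 hN
  have bY := eH1_errY_le hu2 hN
  rw [hcast] at bX bY
  have bD : ∑ i ∈ range (k + 1), eH1 (errX (2 ^ m / 2 ^ i) (errY (2 ^ m / 2 ^ (k - i)) u)) ≤
      ENNReal.ofReal (6 * 4 ^ k * H ^ 3) * eL2 (uxxyy u) := by
    refine le_trans ?_
      (mul_le_mul_left (ENNReal.ofReal_le_ofReal (sum_diagonal_weights_le k hH0)) _)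
    rw [ENNReal.ofReal_sum_of_nonneg fun i _ => by positivity, sum_mul]
    refine sum_le_sum fun i hi => ?_
    have hi' := mem_range.1 hi
    have h := eH1_errX_errY_le hu (hpos i (by omega)) (hpos (k - i) (by omega))
    rwa [inv_natCast_two_pow_div (by omega), inv_natCast_two_pow_div (by omega)] at h
  have bS : ∑ i ∈ range k, eH1 (errX (2 ^ m / 2 ^ (i + 1)) (errY (2 ^ m / 2 ^ (k - i)) u)) ≤
      ENNReal.ofReal (12 * 4 ^ k * H ^ 3) * eL2 (uxxyy u) := by
    refine le_trans ?_
      (mul_le_mul_left (ENNReal.ofReal_le_ofReal (sum_superdiagonal_weights_le k hH0)) _)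
    rw [ENNReal.ofReal_sum_of_nonneg fun i _ => by positivity, sum_mul]
    refine sum_le_sum fun i hi => ?_
    have hi' := mem_range.1 hi
    have h := eH1_errX_errY_le hu (hpos (i + 1) (by omega)) (hpos (k - i) (by omega))
    rwa [inv_natCast_two_pow_div (by omega), inv_natCast_two_pow_div (by omega)] at h
  have sDsum := (SliceDifferentiable.sum sD).neg
  have sSsum := SliceDifferentiable.sum sS
  have hXX0 := L2norm_nonneg (pderivX (pderivX u))
  have hXY0 := L2norm_nonneg (pderivX (pderivY u))
  have hYY0 := L2norm_nonneg (pderivY (pderivY u))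
  have hQ0 := L2norm_nonneg (uxxyy u)
  have hsemi : 0 ≤ semi2 u := by unfold semi2; positivity
  simp only [sub_msInterp_eq]
  refine energyNorm_le_of_eH1_le (((sX.add sY).add sDsum).add sSsum).continuous (by positivity) ?_
  have htri := ((sX.add sY).add sDsum).eH1_add_le sSsum
  refine htri.trans ?_
  have hsum := add_le_add (((sX.add sY).eH1_add_le sDsum).trans
    (add_le_add ((sX.eH1_add_le sY).trans (add_le_add bX bY))
      ((eH1_neg _).le.trans ((eH1_sum_le sD).trans bD)))) ((eH1_sum_le sS).trans bS)
  refine hsum.trans ?_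
  rw [eL2_eq_ofReal_L2norm hXX.continuous, eL2_eq_ofReal_L2norm hXY.continuous,
    eL2_eq_ofReal_L2norm hYY.continuous, eL2_eq_ofReal_L2norm hQ.continuous,
    ← ENNReal.ofReal_ofNat 2, ← ENNReal.ofReal_mul (by positivity),
    ← ENNReal.ofReal_mul (by positivity), ← ENNReal.ofReal_mul (by positivity),
    ← ENNReal.ofReal_mul (by positivity), ← ENNReal.ofReal_add (by positivity) (by positivity),
    ← ENNReal.ofReal_add (by positivity) (by positivity), ← ENNReal.ofReal_mul hH0,
    ← ENNReal.ofReal_mul hH0, ← ENNReal.ofReal_add (by positivity) (by positivity),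
    ← ENNReal.ofReal_add (by positivity) (by positivity),
    ← ENNReal.ofReal_add (by positivity) (by positivity)]
  refine ENNReal.ofReal_le_ofReal ?_
  rw [← inv_pow, ← hH, semi2, pow_succ (4 : ℝ) k]
  have t1 := mul_nonneg hH0 hXX0
  have t2 := mul_nonneg hH0 hXY0
  have t3 := mul_nonneg hH0 hYY0
  have t4 : 0 ≤ 4 ^ k * H ^ 3 * L2norm (uxxyy u) := by positivity
  linarith

/-! ### Reduction to globally smooth functions -/

theorem C4Near.exists_contDiff_eqOn {u : ℝ × ℝ → ℝ} (hu : C4Near u) :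
    ∃ w : ℝ × ℝ → ℝ, ContDiff ℝ 4 w ∧ Set.EqOn u w unitSquare := by
  obtain ⟨U, hU, hsub, huU⟩ := hu
  obtain ⟨χ, h0, h1, -⟩ := exists_contMDiffMap_zero_one_nhds_of_isClosed (n := 4)
    (modelWithCornersSelf ℝ (ℝ × ℝ)) hU.isClosed_compl isCompact_unitSquare.isClosed
    (Set.disjoint_left.2 fun p hp hp' => hp (hsub hp'))
  have hχ : ContDiff ℝ 4 χ := χ.contMDiff.contDiff
  refine ⟨fun p => χ p * u p, contDiff_iff_contDiffAt.2 fun p => ?_, fun p hp => ?_⟩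
  · by_cases hp : p ∈ U
    · exact hχ.contDiffAt.mul (huU.contDiffAt (hU.mem_nhds hp))
    · refine (contDiffAt_const (c := (0 : ℝ))).congr_of_eventuallyEq ?_
      filter_upwards [h0.filter_mono (nhds_le_nhdsSet hp)] with q hq
      simp [hq]
  · have := h1.self_of_nhdsSet p hp
    simp [this]

theorem node_mem_Icc {N i : ℕ} (hi : i ∈ range (N + 1)) : (i : ℝ) / N ∈ Set.Icc (0 : ℝ) 1 :=
  ⟨by positivity, div_le_one_of_le₀
    (by exact_mod_cast Nat.lt_succ_iff.1 (mem_range.1 hi)) (by positivity)⟩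

theorem interp_congr {u w : ℝ × ℝ → ℝ} (h : Set.EqOn u w unitSquare) (M N : ℕ) :
    interp M N u = interp M N w := by
  funext p
  refine sum_congr rfl fun i hi => sum_congr rfl fun j hj => ?_
  rw [h ⟨node_mem_Icc hi, node_mem_Icc hj⟩]

theorem energyNorm_congr {f g : ℝ × ℝ → ℝ} (h : Set.EqOn f g Omega2) :
    energyNorm f = energyNorm g := by
  unfold energyNorm
  congr 1
  refine setIntegral_congr_fun isOpen_Omega2.measurableSet fun p hp => ?_
  simp only [pderivX_eqOn isOpen_Omega2 h hp, pderivY_eqOn isOpen_Omega2 h hp, h hp]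

/-- Energy-norm error bound for the multiscale interpolant:
`|||u − I^{(k)}_{N,N}u||| ≤ C (N⁻¹ |u|₂ + 4^{k+1} N⁻³ ‖∂⁴u/∂x²∂y²‖_{0,Ω})` for `N = 2^m`,
`1 ≤ k ≤ m`. -/
theorem multiscale_interpolant_error_bound :
    ∃ C : ℝ, 0 < C ∧ ∀ (m k : ℕ), 1 ≤ m → 1 ≤ k → k ≤ m →
      ∀ u : ℝ × ℝ → ℝ, C4Near u → VanishOnBoundary u →
        energyNorm (fun p => u p - msInterp (2 ^ m) k u p) ≤
          C * (((2 : ℝ) ^ m)⁻¹ * semi2 u +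
            4 ^ (k + 1) * (((2 : ℝ) ^ m) ^ 3)⁻¹ * L2norm (uxxyy u)) := by
  refine ⟨5, by norm_num, fun m k _ _ hkm u hu _ => ?_⟩
  obtain ⟨w, hw, huw⟩ := hu.exists_contDiff_eqOn
  have hΩ : Set.EqOn u w Omega2 := huw.mono Omega2_subset_unitSquare
  have hX := pderivX_eqOn isOpen_Omega2 hΩ
  have hY := pderivY_eqOn isOpen_Omega2 hΩ
  have hXX := pderivX_eqOn isOpen_Omega2 hX
  have hXY := pderivX_eqOn isOpen_Omega2 hY
  have hYY := pderivY_eqOn isOpen_Omega2 hY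
  have hQ : Set.EqOn (uxxyy u) (uxxyy w) Omega2 :=
    pderivX_eqOn isOpen_Omega2 (pderivX_eqOn isOpen_Omega2 hYY)
  have herr : Set.EqOn (fun p => u p - msInterp (2 ^ m) k u p)
      (fun p => w p - msInterp (2 ^ m) k w p) Omega2 := fun p hp => by
    simp only [msInterp, interp_congr huw, hΩ hp]
  have hsemi : semi2 u = semi2 w := by
    rw [semi2, semi2, L2norm_congr hXX, L2norm_congr hXY, L2norm_congr hYY]
  rw [energyNorm_congr herr, hsemi, L2norm_congr hQ]
  exact energyNorm_sub_msInterp_le hkm hw
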